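/- For every q ∈ [0,1] there exists an integer N such that for all n ≥ N, S(q, n+1) < S(q, n); that is, the expected number of searched items is eventually strictly decreasing in the number of available options. -/

import Mathlib

/-- The regret-minimizing probability of opening another box when `k` boxes remain. -/
noncomputable def alphaStar (ubar c : ℝ) (k : ℕ) : ℝ :=
  (k : ℝ) * (ubar - c) ^ k / (((k : ℝ) - 1) * (ubar - c) ^ k + ubar ^ k)

/-- Expected number of boxes opened under the regret-minimizing search rule when
the true data-generating process is i.i.d. with success probability `q`:
`S(q,n) = Σ_{i=1}^n (1-q)^{n-i} ∏_{j=i}^n α_j*`. -/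
noncomputable def expSearch (ubar c q : ℝ) (n : ℕ) : ℝ :=
  ∑ i ∈ Finset.Icc 1 n, (1 - q) ^ (n - i) * ∏ j ∈ Finset.Icc i n, alphaStar ubar c j

lemma expSearch_succ (u c q : ℝ) (n : ℕ) :
    expSearch u c q (n + 1) = alphaStar u c (n + 1) * (1 + (1 - q) * expSearch u c q n) := by
  unfold expSearch
  rw [Finset.sum_Icc_succ_top (by omega)]
  simp only [Nat.sub_self, pow_zero, Finset.Icc_self, Finset.prod_singleton, one_mul]
  rw [mul_add, mul_one, add_comm, Finset.mul_sum, Finset.mul_sum]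
  congr 1
  apply Finset.sum_congr rfl
  intro i hi
  rw [Finset.mem_Icc] at hi
  rw [Finset.prod_Icc_succ_top (by omega), Nat.sub_add_comm hi.2, pow_succ]
  ring

lemma alphaStar_eq (u c : ℝ) (hu : 0 < u) (k : ℕ) :
    alphaStar u c k = (k : ℝ) * ((u - c) / u) ^ k / (((k : ℝ) - 1) * ((u - c) / u) ^ k + 1) := by
  unfold alphaStar
  have hk : u ^ k ≠ 0 := by positivity
  rw [div_pow]
  rw [← mul_div_mul_right _ (((k : ℝ) - 1) * ((u - c) ^ k / u ^ k) + 1) hk]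
  congr 1 <;> field_simp

theorem expSearch_eventually_strictly_decreasing (ubar c : ℝ) (hc : 0 < c) (hcu : c < ubar)
    (q : ℝ) (hq : q ∈ Set.Icc (0:ℝ) 1) :
    ∃ N : ℕ, ∀ n : ℕ, N ≤ n → expSearch ubar c q (n + 1) < expSearch ubar c q n := by
  have hu : 0 < ubar := hc.trans hcu
  obtain ⟨r, hr⟩ : ∃ r, r = (ubar - c) / ubar := ⟨_, rfl⟩
  have hr0 : 0 < r := by rw [hr]; exact div_pos (by linarith) hu
  have hr1 : r < 1 := by rw [hr, div_lt_one hu]; linarith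
  have ha : ∀ k : ℕ, alphaStar ubar c k = (k : ℝ) * r ^ k / (((k : ℝ) - 1) * r ^ k + 1) := by
    intro k; rw [alphaStar_eq _ _ hu, hr]
  obtain ⟨hq0, hq1⟩ := hq
  obtain ⟨p, hp⟩ : ∃ p, p = 1 - q := ⟨_, rfl⟩
  have hp0 : 0 ≤ p := by linarith
  have hp1 : p ≤ 1 := by linarith
  have hS : ∀ n, expSearch ubar c q (n + 1) =
      alphaStar ubar c (n + 1) * (1 + p * expSearch ubar c q n) := by
    intro n; rw [expSearch_succ, hp]
  have hS0 : expSearch ubar c q 0 = 0 := by simp [expSearch]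
  generalize expSearch ubar c q = S at *
  generalize alphaStar ubar c = a at *
  have hpow : ∀ n : ℕ, 0 < r ^ n := fun n => by positivity
  have hpow1 : ∀ n : ℕ, r ^ n ≤ 1 := fun n => pow_le_one₀ hr0.le hr1.le
  have hD : ∀ n : ℕ, 1 ≤ ((((n + 1 : ℕ) : ℝ)) - 1) * r ^ (n + 1) + 1 := by
    intro n
    push_cast
    have := hpow (n + 1)
    have : 0 ≤ ((n : ℝ) + 1 - 1) * r ^ (n + 1) := by
      rw [add_sub_cancel_right]; positivity
    linarith
  have ha0 : ∀ n, 0 < a (n + 1) := by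
    intro n; rw [ha]
    exact div_pos (mul_pos (by positivity) (hpow _)) (by linarith [hD n])
  have ha1 : ∀ n, a (n + 1) ≤ 1 := by
    intro n; rw [ha, div_le_one (by linarith [hD n])]
    linarith [hpow1 (n + 1)]
  have haU : ∀ n, a (n + 1) ≤ ((n : ℝ) + 1) * r ^ (n + 1) := by
    intro n; rw [ha]
    refine (div_le_self (by positivity) (hD n)).trans ?_
    push_cast; rfl
  have hSn : ∀ n, 0 ≤ S n ∧ S n ≤ n := by
    intro n
    induction n with
    | zero => simp [hS0]
    | succ n ih =>
      rw [hS]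
      have h1 : 0 ≤ p * S n := mul_nonneg hp0 ih.1
      have h2 : p * S n ≤ n := (mul_le_of_le_one_left ih.1 hp1).trans ih.2
      refine ⟨mul_nonneg (ha0 n).le (by linarith), ?_⟩
      refine (mul_le_of_le_one_left (by linarith) (ha1 n)).trans ?_
      push_cast; linarith
  have hpS : ∀ n, 0 ≤ p * S n ∧ p * S n ≤ S n := fun n =>
    ⟨mul_nonneg hp0 (hSn n).1, mul_le_of_le_one_left (hSn n).1 hp1⟩
  have hSU : ∀ n, S (n + 1) ≤ ((n : ℝ) + 1) ^ 2 * r ^ (n + 1) := by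
    intro n
    rw [hS]
    calc a (n + 1) * (1 + p * S n) ≤ (((n : ℝ) + 1) * r ^ (n + 1)) * (1 + n) := by
          apply mul_le_mul (haU n) _ _ (by positivity)
          · linarith [hpS n, hSn n]
          · linarith [hpS n]
      _ = _ := by ring
  have t1 : Filter.Tendsto (fun n : ℕ => (n : ℝ) ^ 2 * r ^ n) Filter.atTop (nhds 0) :=
    tendsto_pow_const_mul_const_pow_of_lt_one 2 hr0.le hr1
  have t2 : Filter.Tendsto (fun n : ℕ => (n : ℝ) * r ^ n) Filter.atTop (nhds 0) :=
    tendsto_self_mul_const_pow_of_lt_one hr0.le hr1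
  have t3 : Filter.Tendsto (fun n : ℕ => 1 / (n : ℝ)) Filter.atTop (nhds 0) :=
    tendsto_one_div_atTop_nhds_zero_nat
  have t4 : Filter.Tendsto (fun n : ℕ => (1 + 1 / (n : ℝ)) * r * (1 + (n : ℝ) ^ 2 * r ^ n) *
      (1 + (n : ℝ) * r ^ n)) Filter.atTop (nhds ((1 + 0) * r * (1 + 0) * (1 + 0))) :=
    (((t3.const_add 1).mul_const r).mul (t1.const_add 1)).mul (t2.const_add 1)
  have e := t4.eventually_lt_const (u := 1) (by linarith)
  obtain ⟨N, hN⟩ := Filter.eventually_atTop.1 e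
  refine ⟨N + 1, fun n hn => ?_⟩
  obtain ⟨m, rfl⟩ : ∃ m, n = m + 1 := ⟨n - 1, by omega⟩
  have key := hN (m + 1) (by omega)
  have hlow : a (m + 1) ≤ S (m + 1) := by
    rw [hS]; exact le_mul_of_one_le_right (ha0 m).le (by linarith [hpS m])
  refine lt_of_lt_of_le ?_ hlow
  rw [ha (m + 1), lt_div_iff₀ (by linarith [hD m]), hS]
  have hx := haU (m + 1)
  have hs := hSU m
  have hps := hpS (m + 1)
  have hd := hD m
  have hpm := hpow (m + 1)
  push_cast at *
  have hm : (0 : ℝ) < (m : ℝ) + 1 := by positivity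
  generalize (m : ℝ) + 1 = x at *
  calc a (m + 1 + 1) * (1 + p * S (m + 1)) * ((x - 1) * r ^ (m + 1) + 1)
      ≤ ((x + 1) * r ^ (m + 1 + 1)) * (1 + x ^ 2 * r ^ (m + 1)) * (1 + x * r ^ (m + 1)) := by
        apply mul_le_mul
        · apply mul_le_mul hx <;> first | positivity | linarith
        · linarith
        · linarith
        · positivity
    _ = (x * r ^ (m + 1)) * ((1 + 1 / x) * r * (1 + x ^ 2 * r ^ (m + 1)) *
          (1 + x * r ^ (m + 1))) := by
        field_simp
        ring
    _ < x * r ^ (m + 1) := by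
        have : 0 < x * r ^ (m + 1) := by positivity
        exact mul_lt_of_lt_one_right this key
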